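/- arXiv:math/9712237 — 3 statements merged into one kernel-verified Lean document; each statement's English description precedes it below -/
import Mathlib

section
/- Let k be a positive integer and c_1, …, c_k nonnegative integers. For a permutation π, let a_i(π) denote the number of cycles of π of length i. Then lim_{n→∞} #{π ∈ S_n : a_i(π) = c_i for all 1 ≤ i ≤ k} / n! = ∏_{i=1}^k e^{−1/i} · (1/i)^{c_i} / c_i!. That is, the joint distribution of (a_1, …, a_k) for a uniformly random permutation of S_n converges, as n → ∞, to that of independent Poisson random variables with parameters 1, 1/2, …, 1/k. -/
/-- `a_i(π)`: the number of cycles (orbits) of length `i` of the permutation `π`. -/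
noncomputable def numCycles (n : ℕ) (π : Equiv.Perm (Fin n)) (i : ℕ) : ℕ :=
  Set.ncard {o : Set (Fin n) | (∃ x, o = {y | π.SameCycle x y}) ∧ o.ncard = i}

open Finset in
noncomputable def pparts (n : ℕ) (π : Equiv.Perm (Fin n)) : Multiset ℕ :=
  π.cycleType + Multiset.replicate (n - #π.support) 1

noncomputable def PartSet (n : ℕ) : Finset (Multiset ℕ) :=
  (Finset.univ : Finset (Nat.Partition n)).image (fun p => p.parts)

lemma mem_PartSet {n : ℕ} {m : Multiset ℕ} : m ∈ PartSet n ↔ m.sum = n ∧ 0 ∉ m := by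
  unfold PartSet
  simp only [Finset.mem_image, Finset.mem_univ, true_and]
  constructor
  · rintro ⟨p, rfl⟩
    exact ⟨p.parts_sum, fun h => absurd (p.parts_pos h) (lt_irrefl 0)⟩
  · rintro ⟨h1, h2⟩
    exact ⟨⟨m, fun {i} hi => Nat.pos_of_ne_zero (fun h => h2 (h ▸ hi)), h1⟩, rfl⟩

noncomputable def ww (m : Multiset ℕ) : ℝ :=
  1 / ((m.prod * ∏ i ∈ m.toFinset, (m.count i).factorial : ℕ) : ℝ)

lemma ww_add (p q : Multiset ℕ) (h : Disjoint p q) : ww (p + q) = ww p * ww q := by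
  unfold ww
  have h1 : ∏ i ∈ (p+q).toFinset, ((p+q).count i).factorial =
      (∏ i ∈ p.toFinset, (p.count i).factorial) * ∏ i ∈ q.toFinset, (q.count i).factorial := by
    rw [Multiset.toFinset_add, Finset.prod_union (Multiset.disjoint_toFinset.2 h)]
    congr 1
    · apply Finset.prod_congr rfl
      intro i hi
      have : i ∉ q := Multiset.disjoint_left.1 h (by simpa using hi)
      rw [Multiset.count_add, Multiset.count_eq_zero_of_notMem this, add_zero]
    · apply Finset.prod_congr rfl
      intro i hi
      have : i ∉ p := Multiset.disjoint_right.1 h (by simpa using hi)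
      rw [Multiset.count_add, Multiset.count_eq_zero_of_notMem this, zero_add]
  rw [h1, Multiset.prod_add]
  push_cast
  rw [div_mul_div_comm]
  congr 1 <;> ring

lemma ww_replicate (j i : ℕ) : ww (Multiset.replicate j i) = (1 / (i:ℝ)) ^ j / j.factorial := by
  unfold ww
  rcases Nat.eq_zero_or_pos j with rfl | hj
  · simp
  · rw [Multiset.toFinset_replicate, if_neg hj.ne']
    simp
    field_simp

lemma pparts_mem (n : ℕ) (π : Equiv.Perm (Fin n)) : pparts n π ∈ PartSet n := by
  rw [mem_PartSet]
  have h : π.support.card ≤ n := by simpa using Finset.card_le_univ π.support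
  constructor
  · simp [pparts, Equiv.Perm.sum_cycleType]; omega
  · intro h0
    rcases Multiset.mem_add.1 h0 with h1 | h1
    · have := Equiv.Perm.one_lt_of_mem_cycleType h1; omega
    · have := Multiset.eq_of_mem_replicate h1; omega

lemma alg_aux (a x y z : ℝ) (hx : x ≠ 0) (hy : y ≠ 0) (hz : z ≠ 0) :
    a = a * (z * x * y) * (1 / (x * y) * (1 / z)) := by
  field_simp

lemma card_pparts (n : ℕ) (m : Multiset ℕ) (hm : m ∈ PartSet n) :
    (((Finset.univ : Finset (Equiv.Perm (Fin n))).filter (fun π => pparts n π = m)).card : ℝ)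
      = n.factorial * ww m := by
  obtain ⟨hs, h0⟩ := mem_PartSet.1 hm
  set q := m.filter (fun a => 2 ≤ a) with hq
  have hdec : m = q + Multiset.replicate (m.count 1) 1 := by
    ext a
    rw [Multiset.count_add, Multiset.count_filter, Multiset.count_replicate]
    rcases a with _ | _ | a
    · simp [Multiset.count_eq_zero_of_notMem h0]
    · simp
    · simp
  have hsum : q.sum + m.count 1 = n := by
    rw [← hs]; conv_rhs => rw [hdec]
    simp
  have hfil : ∀ π : Equiv.Perm (Fin n), pparts n π = m ↔ π.cycleType = q := by
    intro π
    constructor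
    · intro h
      rw [hq, ← h]
      have := Equiv.Perm.filter_parts_partition_eq_cycleType (σ := π)
      rw [Equiv.Perm.parts_partition, Fintype.card_fin] at this
      exact this.symm
    · intro h
      rw [hdec, pparts, h, ← Equiv.Perm.sum_cycleType, h]
      congr 2
      omega
  simp only [hfil]
  have key := Equiv.Perm.card_of_cycleType_mul_eq (Fin n) q
  rw [if_pos ⟨by rw [Fintype.card_fin]; omega, fun a ha => (Multiset.mem_filter.1 ha).2⟩,
    Fintype.card_fin] at key
  have hw : ww m = ww q * (1 / (m.count 1).factorial) := by
    conv_lhs => rw [hdec]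
    rw [ww_add, ww_replicate]
    · simp
    · rw [Multiset.disjoint_left]
      intro a ha hb
      have := (Multiset.mem_filter.1 ha).2
      have := Multiset.eq_of_mem_replicate hb
      omega
  have hn : n - q.sum = m.count 1 := by omega
  rw [hw, ww, ← key, hn]
  have hp : q.prod ≠ 0 := by
    intro h; exact h0 (Multiset.mem_filter.1 (Multiset.prod_eq_zero_iff.1 h)).1
  have : (q.prod : ℝ) ≠ 0 := by exact_mod_cast hp
  have h2 : ((∏ i ∈ q.toFinset, (q.count i).factorial : ℕ) : ℝ) ≠ 0 := by
    exact_mod_cast Finset.prod_ne_zero_iff.2 (fun i _ => Nat.factorial_ne_zero _)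
  have h3 : ((m.count 1).factorial : ℝ) ≠ 0 := by exact_mod_cast Nat.factorial_ne_zero _
  rw [Nat.cast_mul, Nat.cast_mul, Nat.cast_mul, Nat.cast_mul]
  exact alg_aux _ _ _ _ this h2 h3

lemma numCycles_eq (n : ℕ) (π : Equiv.Perm (Fin n)) (i : ℕ) (hi : 1 ≤ i) :
    numCycles n π i = (pparts n π).count i := by
  unfold numCycles
  rw [pparts, Multiset.count_add, Multiset.count_replicate]
  have hfix : ∀ x, π x = x → {y | π.SameCycle x y} = {x} := by
    intro x hx
    ext y
    simp only [Set.mem_ofPred_eq, Set.mem_singleton_iff]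
    constructor
    · intro h
      obtain ⟨z, rfl⟩ := h
      exact Equiv.Perm.zpow_apply_eq_self_of_apply_eq_self hx z
    · rintro rfl; exact Equiv.Perm.SameCycle.refl _ _
  have hmov : ∀ x, π x ≠ x → {y | π.SameCycle x y} = ((π.cycleOf x).support : Set (Fin n)) := by
    intro x hx
    ext y
    simp [-Equiv.Perm.mem_support, Equiv.Perm.mem_support_cycleOf_iff' hx]
  rcases Nat.lt_or_ge 1 i with h2 | h2
  · rw [if_neg (by omega), add_zero, Equiv.Perm.cycleType_def, Multiset.count_map]
    have : {o : Set (Fin n) | (∃ x, o = {y | π.SameCycle x y}) ∧ o.ncard = i} =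
      (fun g : Equiv.Perm (Fin n) => (g.support : Set (Fin n))) ''
        ((π.cycleFactorsFinset.filter (fun g => i = g.support.card) : Finset _) :
          Set (Equiv.Perm (Fin n))) := by
      ext o
      simp only [Set.mem_ofPred_eq, Set.mem_image, Finset.coe_filter]
      constructor
      · rintro ⟨⟨x, rfl⟩, hc⟩
        by_cases hx : π x = x
        · rw [hfix x hx] at hc; simp at hc; omega
        · rw [hmov x hx] at hc ⊢
          refine ⟨π.cycleOf x, ⟨?_, ?_⟩, rfl⟩
          · rw [Equiv.Perm.cycleOf_mem_cycleFactorsFinset_iff]; simpa using hx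
          · rw [Set.ncard_coe_finset] at hc; exact hc.symm
      · rintro ⟨g, ⟨hg, hc⟩, rfl⟩
        refine ⟨?_, by rw [Set.ncard_coe_finset]; exact hc.symm⟩
        obtain ⟨x, hx⟩ := Finset.card_pos.1 (show 0 < g.support.card by omega)
        have hgx := Equiv.Perm.cycle_is_cycleOf hx hg
        have hx' := Equiv.Perm.mem_support.1 (Equiv.Perm.mem_cycleFactorsFinset_support_le hg hx)
        exact ⟨x, by rw [hmov x hx', ← hgx]⟩
    rw [this, Set.ncard_image_of_injOn, Set.ncard_coe_finset]
    · rfl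
    · intro g hg h hh e
      simp only [Finset.coe_filter, Set.mem_ofPred_eq] at hg hh
      by_contra hne
      have hd := Equiv.Perm.cycleFactorsFinset_pairwise_disjoint π hg.1 hh.1 hne
      rw [Equiv.Perm.disjoint_iff_disjoint_support] at hd
      have e' : g.support = h.support := by
        simpa using e
      rw [← e', disjoint_self] at hd
      rw [hd] at hg
      simp at hg; omega
  · have hi1 : i = 1 := by omega
    subst hi1
    have hz : π.cycleType.count 1 = 0 := by
      rw [Multiset.count_eq_zero]
      intro h; exact absurd (Equiv.Perm.one_lt_of_mem_cycleType h) (lt_irrefl 1)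
    rw [hz, zero_add, if_pos rfl]
    have : {o : Set (Fin n) | (∃ x, o = {y | π.SameCycle x y}) ∧ o.ncard = 1} =
      (fun x : Fin n => ({x} : Set (Fin n))) '' ((π.supportᶜ : Finset (Fin n)) : Set (Fin n)) := by
      ext o
      simp only [Set.mem_ofPred_eq, Set.mem_image]
      constructor
      · rintro ⟨⟨x, rfl⟩, hc⟩
        by_cases hx : π x = x
        · exact ⟨x, by simpa using hx, (hfix x hx).symm⟩
        · rw [hmov x hx, Set.ncard_coe_finset] at hc
          have := Equiv.Perm.two_le_card_support_cycleOf_iff.2 hx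
          omega
      · rintro ⟨x, hx, rfl⟩
        exact ⟨⟨x, (hfix x (by simpa using hx)).symm⟩, by simp⟩
    rw [this, Set.ncard_image_of_injective _ Set.singleton_injective, Set.ncard_coe_finset,
      Finset.card_compl, Fintype.card_fin]

def Good (k : ℕ) (c : ℕ → ℕ) (m : Multiset ℕ) : Prop :=
  ∀ i ∈ Finset.Icc 1 k, m.count i = c i

noncomputable instance (k : ℕ) (c : ℕ → ℕ) : DecidablePred (Good k c) :=
  fun _ => Classical.propDecidable _

noncomputable def AA (n k : ℕ) (c : ℕ → ℕ) : ℝ :=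
  ∑ m ∈ (PartSet n).filter (fun m => Good k c m), ww m

lemma card_eq_AA (n k : ℕ) (c : ℕ → ℕ) :
    (Nat.card {π : Equiv.Perm (Fin n) //
            ∀ i, 1 ≤ i → i ≤ k → numCycles n π i = c i} : ℝ) / n.factorial = AA n k c := by
  have h1 : Nat.card {π : Equiv.Perm (Fin n) //
            ∀ i, 1 ≤ i → i ≤ k → numCycles n π i = c i} =
      ((Finset.univ : Finset (Equiv.Perm (Fin n))).filter
        (fun π => Good k c (pparts n π))).card := by
    rw [← Fintype.card_subtype, ← Nat.card_eq_fintype_card]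
    apply Nat.card_congr
    apply Equiv.subtypeEquivRight
    intro π
    simp only [Good, Finset.mem_Icc]
    constructor
    · intro h i hi
      rw [← numCycles_eq n π i hi.1]; exact h i hi.1 hi.2
    · intro h i h1 h2
      rw [numCycles_eq n π i h1]; exact h i ⟨h1, h2⟩
  rw [h1, Finset.card_eq_sum_card_fiberwise (f := pparts n)
    (t := (PartSet n).filter (fun m => Good k c m))]
  · rw [AA, Nat.cast_sum, Finset.sum_div]
    apply Finset.sum_congr rfl
    intro m hm
    obtain ⟨hm1, hm2⟩ := Finset.mem_filter.1 hm
    have : (Finset.univ.filter (fun π : Equiv.Perm (Fin n) =>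
        Good k c (pparts n π))).filter (fun π => pparts n π = m) =
        Finset.univ.filter (fun π => pparts n π = m) := by
      ext π
      simp only [Finset.mem_filter, Finset.mem_univ, true_and, and_iff_right_iff_imp]
      rintro rfl
      exact hm2
    rw [this, card_pparts n m hm1, mul_div_cancel_left₀]
    exact_mod_cast Nat.factorial_ne_zero n
  · intro π hπ
    have := (Finset.mem_filter.1 hπ).2
    exact Finset.mem_coe.2 (Finset.mem_filter.2 ⟨pparts_mem n π, this⟩)

lemma peel (n k : ℕ) (M : Multiset ℕ) (hM : ∀ a ∈ M, 1 ≤ a ∧ a ≤ k) :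
    AA (n + M.sum) k (fun i => M.count i) = ww M * AA n k 0 := by
  unfold AA
  rw [Finset.mul_sum]
  have hle : ∀ m : Multiset ℕ, (∀ i ∈ Finset.Icc 1 k, m.count i = M.count i) → M ≤ m := by
    intro m hm
    rw [Multiset.le_iff_count]
    intro a
    by_cases ha : a ∈ M
    · rw [hm a (Finset.mem_Icc.2 (hM a ha))]
    · rw [Multiset.count_eq_zero_of_notMem ha]; exact Nat.zero_le _
  symm
  refine Finset.sum_nbij' (fun p => M + p) (fun m => m - M) ?_ ?_ ?_ ?_ ?_
  · intro p hp
    simp only [Finset.mem_filter, mem_PartSet, Multiset.sum_add, Multiset.mem_add] at hp ⊢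
    simp only [Good, Multiset.count_add, Pi.zero_apply] at hp ⊢
    obtain ⟨⟨h1, h2⟩, h3⟩ := hp
    refine ⟨⟨by omega, ?_⟩, fun i hi => by rw [h3 i hi, add_zero]⟩
    rintro (h | h)
    · exact absurd (hM 0 h).1 (by omega)
    · exact h2 h
  · intro m hm
    simp only [Finset.mem_filter, mem_PartSet] at hm ⊢
    simp only [Good] at hm ⊢
    obtain ⟨⟨h1, h2⟩, h3⟩ := hm
    refine ⟨⟨?_, fun h => h2 (Multiset.mem_of_le (Multiset.sub_le_self m M) h)⟩, fun i hi => ?_⟩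
    · have := congrArg Multiset.sum (Multiset.sub_add_cancel (hle m h3))
      rw [Multiset.sum_add] at this
      omega
    · rw [Multiset.count_sub, h3 i hi]; simp
  · intro p _
    simp
  · intro m hm
    exact add_tsub_cancel_of_le (hle m (Finset.mem_filter.1 hm).2)
  · intro p hp
    rw [ww_add]
    rw [Multiset.disjoint_left]
    intro a ha hb
    have h3 := (Finset.mem_filter.1 hp).2 a (Finset.mem_Icc.2 (hM a ha))
    exact (Multiset.count_ne_zero.2 hb) h3

lemma split (n k : ℕ) : AA n k 0 = ∑ j ∈ Finset.range (n / (k+1) + 1),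
    (1 / ((k+1 : ℕ) : ℝ)) ^ j / j.factorial * AA (n - (k+1) * j) (k+1) 0 := by
  conv_lhs => unfold AA
  rw [← Finset.sum_fiberwise_of_maps_to (t := Finset.range (n / (k+1) + 1))
    (g := fun m => m.count (k+1))]
  · apply Finset.sum_congr rfl
    intro j hj
    have hj' : (k+1) * j ≤ n := by
      have : j ≤ n / (k+1) := by simpa [Nat.lt_succ_iff] using hj
      rw [Nat.le_div_iff_mul_le (by omega)] at this
      linarith [mul_comm (k+1) j]
    rw [← ww_replicate, ← peel]
    · have e : n - (k+1) * j + (Multiset.replicate j (k+1)).sum = n := by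
        simp [mul_comm j]; omega
      rw [e]
      unfold AA
      apply Finset.sum_congr _ (fun _ _ => rfl)
      rw [Finset.filter_filter]
      apply Finset.filter_congr
      intro m _
      simp only [Good, Finset.mem_Icc, Pi.zero_apply, Multiset.count_replicate]
      constructor
      · rintro ⟨h1, h2⟩ i hi
        split_ifs with h
        · rw [← h]; exact h2
        · exact h1 i (by omega)
      · intro h
        refine ⟨fun i hi => ?_, ?_⟩
        · rw [h i (by omega), if_neg (by omega)]
        · rw [h (k+1) (by omega), if_pos rfl]
    · intro a ha
      rw [Multiset.eq_of_mem_replicate ha]; omega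
  · intro m hm
    obtain ⟨h1, h2⟩ := mem_PartSet.1 (Finset.mem_filter.1 hm).1
    rw [Finset.mem_range, Nat.lt_succ_iff, Nat.le_div_iff_mul_le (by omega)]
    have hle : Multiset.replicate (m.count (k+1)) (k+1) ≤ m := Multiset.le_count_iff_replicate_le.1 le_rfl
    obtain ⟨u, hu⟩ := Multiset.le_iff_exists_add.1 hle
    have := congrArg Multiset.sum hu
    rw [Multiset.sum_add, Multiset.sum_replicate, smul_eq_mul] at this
    omega

lemma binv (t : ℝ) (N : ℕ) (hN : 0 < N) (β : ℕ → ℝ) :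
    ∑ j ∈ Finset.range N, (-t) ^ j / j.factorial *
      ∑ l ∈ Finset.range (N - j), t ^ l / l.factorial * β (j + l) = β 0 := by
  simp_rw [Finset.mul_sum]
  rw [← Finset.sum_range_diag_flip N (fun j l => (-t) ^ j / j.factorial *
    (t ^ l / l.factorial * β (j + l)))]
  have : ∀ m ∈ Finset.range N, ∑ j ∈ Finset.range (m+1), (-t) ^ j / j.factorial *
    (t ^ (m - j) / (m-j).factorial * β (j + (m - j))) = if m = 0 then β 0 else 0 := by
    intro m _
    have h1 : ∑ j ∈ Finset.range (m+1), (-t) ^ j / j.factorial *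
      (t ^ (m - j) / (m-j).factorial * β (j + (m - j))) =
      β m / m.factorial * ((-t) + t) ^ m := by
      rw [add_pow, Finset.mul_sum]
      apply Finset.sum_congr rfl
      intro j hj
      have hj' : j ≤ m := by simpa [Nat.lt_succ_iff] using hj
      rw [Nat.add_sub_cancel' hj', Nat.cast_choose ℝ hj']
      have := Nat.factorial_ne_zero m
      have := Nat.factorial_ne_zero j
      have := Nat.factorial_ne_zero (m - j)
      field_simp
    rw [h1]
    split_ifs with h
    · subst h; simp
    · simp [h]
  rw [Finset.sum_congr rfl this, Finset.sum_ite_eq' , if_pos (Finset.mem_range.2 hN)]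

lemma inv_aux (a b : ℕ → ℝ) (t : ℝ) (K : ℕ)
    (h : ∀ n, a n = ∑ j ∈ Finset.range (n / K + 1), t ^ j / j.factorial * b (n - K * j)) (n : ℕ) :
    b n = ∑ j ∈ Finset.range (n / K + 1), (-t) ^ j / j.factorial * a (n - K * j) := by
  have h1 := binv t (n / K + 1) (Nat.succ_pos _) (fun j => b (n - K * j))
  have h2 : b (n - K * 0) = b n := by simp
  rw [← h2, ← h1]
  apply Finset.sum_congr rfl
  intro j hj
  have hj' : j ≤ n / K := Nat.lt_succ_iff.1 (Finset.mem_range.1 hj)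
  rw [h (n - K * j), Nat.sub_mul_div, Nat.sub_add_comm hj']
  congr 1
  apply Finset.sum_congr rfl
  intro l _
  rw [Nat.sub_sub, mul_add]

lemma split_inv (n k : ℕ) : AA n (k+1) 0 = ∑ j ∈ Finset.range (n / (k+1) + 1),
    (-(1 / ((k+1 : ℕ) : ℝ))) ^ j / j.factorial * AA (n - (k+1) * j) k 0 :=
  inv_aux (fun n => AA n k 0) (fun n => AA n (k+1) 0) _ (k+1) (fun n => split n k) n

lemma AA_zero (n : ℕ) : AA n 0 0 = 1 := by
  rw [← card_eq_AA]
  have : Nat.card {π : Equiv.Perm (Fin n) // ∀ i, 1 ≤ i → i ≤ 0 →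
      numCycles n π i = (0 : ℕ → ℕ) i} = n.factorial := by
    rw [Nat.card_congr (Equiv.subtypeUnivEquiv (fun π i h1 h2 => by omega))]
    simp [Nat.card_eq_fintype_card, Fintype.card_perm]
  rw [this]
  exact div_self (by exact_mod_cast Nat.factorial_ne_zero n)

lemma AA_nonneg (n k : ℕ) (c) : 0 ≤ AA n k c := by
  rw [← card_eq_AA]; positivity

lemma AA_le_one (n k : ℕ) (c) : AA n k c ≤ 1 := by
  rw [← card_eq_AA]
  apply div_le_one_of_le₀ _ (by positivity)
  have := Nat.card_le_card_of_injective
    (Subtype.val : {π : Equiv.Perm (Fin n) // ∀ i, 1 ≤ i → i ≤ k →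
      numCycles n π i = c i} → _) Subtype.val_injective
  rw [Nat.card_eq_fintype_card (α := Equiv.Perm (Fin n)), Fintype.card_perm, Fintype.card_fin] at this
  exact_mod_cast this

open Filter Topology in
lemma AA_lim (k : ℕ) : Tendsto (fun n => AA n k 0) atTop
    (𝓝 (∏ i ∈ Finset.Icc 1 k, Real.exp (-(1 / (i : ℝ))))) := by
  induction k with
  | zero => simp [AA_zero]
  | succ k ih =>
    rw [Finset.prod_Icc_succ_top (by omega)]
    set L := ∏ i ∈ Finset.Icc 1 k, Real.exp (-(1 / (i : ℝ)))
    set t : ℝ := 1 / ((k+1 : ℕ) : ℝ) with ht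
    have hlim : ∑' j : ℕ, (-t) ^ j / j.factorial * L = L * Real.exp (-t) := by
      rw [tsum_mul_right, Real.exp_eq_exp_ℝ, NormedSpace.exp_eq_tsum_div, mul_comm]
    rw [← hlim]
    have hf : (fun n => AA n (k+1) 0) = fun n => ∑' j : ℕ,
        if j ∈ Finset.range (n / (k+1) + 1) then (-t) ^ j / j.factorial * AA (n - (k+1) * j) k 0
          else 0 := by
      funext n
      rw [split_inv, tsum_eq_sum (s := Finset.range (n / (k+1) + 1))]
      · exact Finset.sum_congr rfl (fun j hj => by rw [if_pos hj])
      · intro j hj; rw [if_neg hj]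
    rw [hf]
    apply tendsto_tsum_of_dominated_convergence (Real.summable_pow_div_factorial t)
    · intro j
      have h1 : Tendsto (fun n => (-t) ^ j / j.factorial * AA (n - (k+1) * j) k 0) atTop
          (𝓝 ((-t) ^ j / j.factorial * L)) :=
        (ih.comp (tendsto_sub_atTop_nat ((k+1) * j))).const_mul _
      apply h1.congr'
      filter_upwards [eventually_ge_atTop ((k+1) * j)] with n hn
      rw [if_pos]
      rw [Finset.mem_range, Nat.lt_succ_iff, Nat.le_div_iff_mul_le (by omega), mul_comm]
      exact hn
    · refine Eventually.of_forall fun n j => ?_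
      have ht0 : 0 ≤ t := by positivity
      split_ifs
      · rw [norm_mul, norm_div, norm_pow, norm_neg, Real.norm_of_nonneg ht0,
          Real.norm_of_nonneg (AA_nonneg _ _ _), Real.norm_of_nonneg (by positivity)]
        exact mul_le_of_le_one_right (by positivity) (AA_le_one _ _ _)
      · rw [norm_zero]; positivity

lemma ww_sum (k : ℕ) (c : ℕ → ℕ) :
    ww (∑ i ∈ Finset.Icc 1 k, Multiset.replicate (c i) i) =
      ∏ i ∈ Finset.Icc 1 k, (1 / (i : ℝ)) ^ c i / (c i).factorial := by
  induction k with
  | zero => simp [ww]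
  | succ k ih =>
    rw [Finset.sum_Icc_succ_top (by omega), Finset.prod_Icc_succ_top (by omega), ww_add, ih,
      ww_replicate]
    rw [Multiset.disjoint_left]
    intro a ha hb
    obtain ⟨i, hi, h⟩ := Multiset.mem_sum.1 ha
    have := Multiset.eq_of_mem_replicate hb
    have := Multiset.eq_of_mem_replicate h
    have := Finset.mem_Icc.1 hi
    omega


/-- For `k ≥ 1` and nonnegative integers `c_1, …, c_k`:
`lim_{n→∞} #{π ∈ Sₙ : a_i(π) = c_i, 1 ≤ i ≤ k} / n! = ∏_{i=1}^k e^{−1/i} (1/i)^{c_i} / c_i!`: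
the joint distribution of `(a_1, …, a_k)` for a uniform permutation of `Sₙ` converges
to independent Poisson(1), Poisson(1/2), …, Poisson(1/k). -/
theorem stmt_16 (k : ℕ) (hk : 0 < k) (c : ℕ → ℕ) :
    Filter.Tendsto (fun n : ℕ =>
        (Nat.card {π : Equiv.Perm (Fin n) //
            ∀ i, 1 ≤ i → i ≤ k → numCycles n π i = c i} : ℝ) / n.factorial)
      Filter.atTop
      (nhds (∏ i ∈ Finset.Icc 1 k,
        Real.exp (-(1 / (i : ℝ))) * (1 / (i : ℝ)) ^ c i / (c i).factorial)) := by
  simp_rw [card_eq_AA]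
  set M := ∑ i ∈ Finset.Icc 1 k, Multiset.replicate (c i) i with hMdef
  have hM : ∀ a ∈ M, 1 ≤ a ∧ a ≤ k := by
    intro a ha
    obtain ⟨i, hi, h⟩ := Multiset.mem_sum.1 ha
    rw [Multiset.eq_of_mem_replicate h]
    exact Finset.mem_Icc.1 hi
  have hcount : ∀ i ∈ Finset.Icc 1 k, M.count i = c i := by
    intro i hi
    rw [hMdef, Multiset.count_sum']
    simp_rw [Multiset.count_replicate]
    rw [Finset.sum_ite_eq' , if_pos hi]
  have hAA : ∀ n, AA n k c = AA n k (fun i => M.count i) := by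
    intro n
    unfold AA
    apply Finset.sum_congr _ (fun _ _ => rfl)
    apply Finset.filter_congr
    intro m _
    unfold Good
    exact forall₂_congr (fun i hi => by simp only [hcount i hi])
  rw [← Filter.tendsto_add_atTop_iff_nat M.sum]
  simp_rw [hAA, peel _ k M hM, mul_div_assoc]
  rw [Finset.prod_mul_distrib, ← ww_sum, mul_comm]
  exact (AA_lim k).const_mul _
end

section
/- Let q be a prime power and F the finite field with q² elements. For a monic polynomial φ ∈ F[z] of degree m with φ(0) ≠ 0, define φ̃ ∈ F[z] to be the monic polynomial z^m · φ^{(q)}(1/z) / (φ(0))^q, where φ^{(q)} is obtained from φ by raising each coefficient to the q-th power; explicitly, if φ(z) = z^m + α_{m−1}z^{m−1} + ⋯ + α_1 z + α_0 with α_0 ≠ 0, then φ̃(z) = z^m + (α_1/α_0)^q z^{m−1} + ⋯ + (α_{m−1}/α_0)^q z + (1/α_0)^q. If φ is monic irreducible, φ ≠ z, and φ = φ̃, then the degree of φ is odd. -/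
open Polynomial

/-- `φ^{(q)}`: the polynomial obtained from `φ` by raising each coefficient to the
`q`-th power. -/
noncomputable def coeffPow {F : Type*} [Field F] (q : ℕ) (φ : Polynomial F) :
    Polynomial F :=
  ∑ i ∈ Finset.range (φ.natDegree + 1), Polynomial.C (φ.coeff i ^ q) * Polynomial.X ^ i

/-- `φ̃ = z^m φ^{(q)}(1/z) / (φ(0))^q`: the monic polynomial whose coefficient list is
that of `φ^{(q)}` reversed and divided by `φ(0)^q`. -/
noncomputable def tildePoly {F : Type*} [Field F] (q : ℕ) (φ : Polynomial F) :
    Polynomial F :=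
  Polynomial.C ((φ.coeff 0 ^ q)⁻¹) * (coeffPow q φ).reverse

/-- Let `q` be a prime power and `F` the field with `q²` elements.  If `φ ∈ F[z]` is
monic irreducible, `φ ≠ z`, and `φ = φ̃`, then `deg φ` is odd. -/
theorem stmt_17 (q : ℕ) (hq : IsPrimePow q) (F : Type) [Field F] [Fintype F]
    (hF : Fintype.card F = q ^ 2) (φ : Polynomial F) (hmon : φ.Monic)
    (hirr : Irreducible φ) (hne : φ ≠ Polynomial.X) (hfix : φ = tildePoly q φ) :
    Odd φ.natDegree := by
  classical
  obtain ⟨p, k, hp, hk, rfl⟩ := hq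
  have hp' : p.Prime := hp.nat_prime
  have : Fact p.Prime := ⟨hp'⟩
  have : CharP F p := by
    have h2 : Fintype.card F = p ^ (k * 2) := by rw [hF, pow_mul]
    exact charP_of_card_eq_prime_pow h2
  have : Fact (Irreducible φ) := ⟨hirr⟩
  have hφ0 : φ ≠ 0 := hirr.ne_zero
  let K := AdjoinRoot φ
  have : CharP K p := charP_of_injective_algebraMap (algebraMap F K).injective p
  have : Module.Finite F K := (AdjoinRoot.powerBasis hφ0).finite
  have : Finite K := Module.finite_of_finite F
  have hdim : Module.finrank F K = φ.natDegree := by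
    rw [(AdjoinRoot.powerBasis hφ0).finrank, AdjoinRoot.powerBasis_dim]
  let a : K := AdjoinRoot.root φ
  have ha : φ.eval₂ (algebraMap F K) a = 0 := AdjoinRoot.eval₂_root φ
  have hcp : coeffPow (p ^ k) φ = φ.map (iterateFrobenius F p k) := by
    rw [Polynomial.as_sum_range_C_mul_X_pow (φ.map (iterateFrobenius F p k))]
    simp [coeffPow, iterateFrobenius_def]
  have h1 : (coeffPow (p ^ k) φ).eval₂ (algebraMap F K) (a ^ p ^ k) = 0 := by
    have h := congrArg (iterateFrobenius K p k) ha
    rw [map_zero, Polynomial.hom_eval₂, iterateFrobenius_def] at h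
    rw [hcp, Polynomial.eval₂_map, ← h]
    congr 1
    ext x
    simp [iterateFrobenius_def]
  have h2 : φ.eval₂ (algebraMap F K) (a ^ p ^ k)⁻¹ = 0 := by
    have ha0 : a ≠ 0 := by
      intro h0
      rw [h0, Polynomial.eval₂_at_zero] at ha
      have hc : φ.coeff 0 = 0 := (algebraMap F K).injective (by rw [ha, map_zero])
      apply hφ0
      rw [hfix, tildePoly, hc, zero_pow (pow_pos hp'.pos k).ne']
      simp
    have hb : a ^ p ^ k ≠ 0 := pow_ne_zero _ ha0
    letI := invertibleOfNonzero hb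
    have h3 := (Polynomial.eval₂_reverse_eq_zero_iff (algebraMap F K) (a ^ p ^ k) _).2 h1
    rw [invOf_eq_inv] at h3
    have h4 : (tildePoly (p ^ k) φ).eval₂ (algebraMap F K) (a ^ p ^ k)⁻¹ = 0 := by
      rw [tildePoly, Polynomial.eval₂_mul, h3, mul_zero]
    exact (congrArg (fun f => Polynomial.eval₂ (algebraMap F K) (a ^ p ^ k)⁻¹ f) hfix).trans h4
  let τ₀ : K →ₐ[F] K := AdjoinRoot.liftAlgHom φ (Algebra.ofId F K) _ h2
  have hτ₀ : τ₀ a = (a ^ p ^ k)⁻¹ := AdjoinRoot.liftAlgHom_root ..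
  let τ : K ≃ₐ[F] K := AlgEquiv.ofBijective τ₀ (Algebra.IsAlgebraic.algHom_bijective τ₀)
  have hτ : τ a = (a ^ p ^ k)⁻¹ := hτ₀
  have hs : τ ^ 2 = FiniteField.frobeniusAlgEquivOfAlgebraic F K := by
    have : ((τ ^ 2 : K ≃ₐ[F] K) : K →ₐ[F] K)
        = (FiniteField.frobeniusAlgEquivOfAlgebraic F K : K →ₐ[F] K) := by
      apply AdjoinRoot.algHom_ext
      change (τ ^ 2) a = FiniteField.frobeniusAlgEquivOfAlgebraic F K a
      rw [FiniteField.coe_frobeniusAlgEquivOfAlgebraic, pow_two, AlgEquiv.mul_apply, hτ, map_inv₀,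
        map_pow, hτ, hF]
      simp only [inv_pow]
      rw [← pow_mul, ← pow_two]
      exact inv_inv _
    ext x
    exact DFunLike.congr_fun this x
  by_contra hodd
  rw [Nat.not_odd_iff_even] at hodd
  obtain ⟨n, hn⟩ := hodd
  have hord := FiniteField.orderOf_frobeniusAlgEquivOfAlgebraic F K
  have hcard := IsGalois.card_aut_eq_finrank F K
  rw [hdim] at hord hcard
  have hpos : 0 < φ.natDegree := hirr.natDegree_pos
  have hone : (FiniteField.frobeniusAlgEquivOfAlgebraic F K) ^ n = 1 := by
    rw [← hs, ← pow_mul, two_mul, ← hn, ← hcard]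
    exact pow_card_eq_one'
  have := Nat.le_of_dvd (by omega) (orderOf_dvd_of_pow_eq_one hone)
  omega
end

section
/- Let q be a real number with q ≥ 2, let u be a real number with 0 < u < 1, and let λ be a nonempty partition with c = λ'_1 parts. Then u / ( q^c (q^{c+1} − 1) ) + ∑_{s=2}^∞ u · ( q^{−λ'_s} − q^{−λ'_{s−1}} ) / ( q^c − 1 ) = u·q / ( q^{c+1} − 1 ), and this quantity is strictly less than 1. (The sum has only finitely many nonzero terms, since λ'_s = λ'_{s−1} for all large s.) -/
/-- For real `q ≥ 2`, `0 < u < 1` and a nonempty partition `λ` with `c = λ'_1` parts: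
`u/(q^c(q^{c+1}−1)) + ∑_{s=2}^∞ u(q^{−λ'_s} − q^{−λ'_{s−1}})/(q^c−1) = uq/(q^{c+1}−1)`,
and this total weight out of `λ` in the weighted Young lattice is strictly less
than `1`.  (Here `λ'_s = colLen (s−1)`, 0-indexed, and the sum has finitely many
nonzero terms.) -/
theorem stmt_19 (q u : ℝ) (hq : 2 ≤ q) (hu0 : 0 < u) (hu1 : u < 1)
    (μ : YoungDiagram) (hμ : 0 < μ.card) :
    u / (q ^ μ.colLen 0 * (q ^ (μ.colLen 0 + 1) - 1)) +
        ∑ᶠ (s : ℕ) (_ : 2 ≤ s),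
          u * ((q ^ μ.colLen (s - 1))⁻¹ - (q ^ μ.colLen (s - 2))⁻¹) /
            (q ^ μ.colLen 0 - 1) =
      u * q / (q ^ (μ.colLen 0 + 1) - 1) ∧
    u * q / (q ^ (μ.colLen 0 + 1) - 1) < 1 := by
  have hN : ∀ j, μ.rowLen 0 ≤ j → μ.colLen j = 0 := by
    intro j hj
    by_contra h
    have h1 : (0, j) ∈ μ := YoungDiagram.mem_iff_lt_colLen.2 (Nat.pos_of_ne_zero h)
    have h2 := YoungDiagram.mem_iff_lt_rowLen.1 h1
    omega
  have hc : 0 < μ.colLen 0 := by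
    obtain ⟨⟨i, j⟩, hx⟩ := Finset.card_pos.1 hμ
    have h1 : (0, 0) ∈ μ := μ.up_left_mem (Nat.zero_le i) (Nat.zero_le j) hx
    exact YoungDiagram.mem_iff_lt_colLen.1 h1
  have hsum : ∑ᶠ (s : ℕ) (_ : 2 ≤ s),
          u * ((q ^ μ.colLen (s - 1))⁻¹ - (q ^ μ.colLen (s - 2))⁻¹) /
            (q ^ μ.colLen 0 - 1) =
      u * (1 - (q ^ μ.colLen 0)⁻¹) / (q ^ μ.colLen 0 - 1) := by
    have h1 := finsum_mem_eq_sum_of_inter_support_eq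
      (fun s : ℕ => u * ((q ^ μ.colLen (s - 1))⁻¹ - (q ^ μ.colLen (s - 2))⁻¹) /
            (q ^ μ.colLen 0 - 1)) (s := Set.Ici 2) (t := Finset.Ico 2 (2 + μ.rowLen 0)) (by
        ext s
        simp only [Set.mem_inter_iff, Set.mem_Ici, Function.mem_support, Finset.coe_Ico,
          Set.mem_Ico]
        constructor
        · rintro ⟨a, b⟩
          refine ⟨⟨a, ?_⟩, b⟩
          by_contra h
          apply b
          rw [hN (s - 1) (by omega), hN (s - 2) (by omega)]
          simp
        · rintro ⟨a, b⟩
          exact ⟨a.1, b⟩)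
    simp only [Set.mem_Ici] at h1
    rw [h1, Finset.sum_Ico_eq_sum_range, ← Finset.sum_div, ← Finset.mul_sum]
    have h2 := Finset.sum_range_sub (fun j => (q ^ μ.colLen j)⁻¹) (μ.rowLen 0)
    rw [hN _ le_rfl, pow_zero, inv_one] at h2
    rw [← h2, Nat.add_sub_cancel_left]
    congr 2
    apply Finset.sum_congr rfl
    intro k _
    rw [show 2 + k - 1 = k + 1 by omega, show 2 + k - 2 = k by omega]
  rw [hsum]
  have hx : q ≤ q ^ μ.colLen 0 := le_self_pow₀ (by linarith) (by omega)
  rw [pow_succ]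
  generalize q ^ μ.colLen 0 = x at hx
  have hd : q < x * q - 1 := by nlinarith
  have h1 : x ≠ 0 := by linarith
  have h2 : x - 1 ≠ 0 := by linarith
  have h3 : x * q - 1 ≠ 0 := by linarith
  constructor
  · have h4 : u * (1 - x⁻¹) / (x - 1) = u / x := by
      field_simp
    rw [h4]
    field_simp
    ring
  · rw [div_lt_one (by linarith)]
    nlinarith
end
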